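/- Fix l ≥ 1 and κ = (k_1,…,k_l) ∈ (ℤ/2ℤ)^l, and let λ be an l-multipartition of d. Then every standard λ-tableau t satisfies deg(t) ≡ ε(λ) (mod 2). Equivalently, the Laurent polynomial Σ_{t standard λ-tableau} q^{deg(t)} (which is the graded dimension of the Specht module S(λ) of the cyclotomic KLR algebra in quantum characteristic 2) has non-zero coefficients only in degrees congruent to ε(λ) modulo 2. -/

import Mathlib

/-!
Core definitions: multipartitions, Young diagrams, tableaux, degrees,
in quantum characteristic 2 (residues in ℤ/2ℤ).
Nodes are 0-indexed: the node `(m, a, b)` denotes the box in component `m`,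
row `a+1`, column `b+1` of the paper's 1-indexed conventions.
-/

/-- A node: (component, row, column), all 0-indexed. -/
abbrev Node (l : ℕ) := Fin l × ℕ × ℕ

namespace Cyclo

variable {l d : ℕ}

/-- Residue of a node `(m, a, b)`: `κ m + (b - a)` in `ℤ/2ℤ`. -/
def res (κ : Fin l → ZMod 2) (N : Node l) : ZMod 2 :=
  κ N.1 + (N.2.2 : ZMod 2) - (N.2.1 : ZMod 2)

/-- A set of nodes is (the Young diagram of) a multipartition iff it is
downward closed in rows and columns within each component. -/
def IsDiagram (Y : Set (Node l)) : Prop :=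
  ∀ m a b a' b', (m, a, b) ∈ Y → a' ≤ a → b' ≤ b → (m, a', b') ∈ Y

/-- `M` is an addable node for the diagram `Y`. -/
def Addable (Y : Set (Node l)) (M : Node l) : Prop :=
  M ∉ Y ∧ IsDiagram (insert M Y)

/-- `M` is a removable node of the diagram `Y`. -/
def Removable (Y : Set (Node l)) (M : Node l) : Prop :=
  M ∈ Y ∧ IsDiagram (Y \ {M})

/-- `M` is below `N`: strictly later component, or same component and strictly lower row. -/
def Below (N M : Node l) : Prop :=
  N.1 < M.1 ∨ (N.1 = M.1 ∧ N.2.1 < M.2.1)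

/-- `d_N(Y)`: number of addable nodes for `Y` below `N` of the same residue as `N`,
minus the number of removable nodes of `Y` below `N` of the same residue as `N`. -/
noncomputable def dN (κ : Fin l → ZMod 2) (Y : Set (Node l)) (N : Node l) : ℤ :=
  ({M | Addable Y M ∧ res κ M = res κ N ∧ Below N M}.ncard : ℤ)
    - ({M | Removable Y M ∧ res κ M = res κ N ∧ Below N M}.ncard : ℤ)

/-- The Young diagram of the multipartition whose parts are `lam m a` (0-indexed rows). -/
def diagram (lam : Fin l → ℕ → ℕ) : Set (Node l) :=
  {N | N.2.2 < lam N.1 N.2.1}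

/-- `lam` encodes an `l`-multipartition of `d`: each component is a partition
(antitone, vanishing beyond row `d`) and the sizes sum to `d`. -/
def IsMultipartition (lam : Fin l → ℕ → ℕ) (d : ℕ) : Prop :=
  (∀ m, Antitone (lam m)) ∧ (∀ m a, d ≤ a → lam m a = 0) ∧
    ∑ m : Fin l, ∑ a ∈ Finset.range d, lam m a = d

/-- A λ-tableau, encoded by the function sending `r : Fin d` to the node
occupied by the entry `r + 1`: a bijective filling of the diagram by `1, …, d`. -/
def IsTableau (lam : Fin l → ℕ → ℕ) (t : Fin d → Node l) : Prop :=
  Function.Injective t ∧ Set.range t = diagram lam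

/-- A standard λ-tableau: entries increase along rows and down columns of each
component. -/
def IsStandard (lam : Fin l → ℕ → ℕ) (t : Fin d → Node l) : Prop :=
  IsTableau lam t ∧
    ∀ r s : Fin d, (t r).1 = (t s).1 → (t r).2.1 ≤ (t s).2.1 →
      (t r).2.2 ≤ (t s).2.2 → r ≤ s

/-- Lexicographic (row-reading) order on nodes. -/
def NodeLt (N M : Node l) : Prop :=
  N.1 < M.1 ∨ (N.1 = M.1 ∧ (N.2.1 < M.2.1 ∨ (N.2.1 = M.2.1 ∧ N.2.2 < M.2.2)))

/-- The row-reading tableau `t^λ`: entries `1, …, d` are filled along successive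
rows of the components of `λ`, taking the components in order. -/
def IsRowReading (lam : Fin l → ℕ → ℕ) (t : Fin d → Node l) : Prop :=
  IsTableau lam t ∧ ∀ r s : Fin d, r < s → NodeLt (t r) (t s)

/-- The degree of a (standard) tableau: `deg t = Σ_r d_{N_r}(shape of t_{≤ r})`,
which unfolds the recursion `deg t = d_N(λ) + deg (t_{≤ d-1})`, `deg ∅ = 0`. -/
noncomputable def deg (κ : Fin l → ZMod 2) (t : Fin d → Node l) : ℤ :=
  ∑ r : Fin d, dN κ (t '' {s | s ≤ r}) (t r)

/-- `ε` of a single partition (the sum of `⌊λ_a/2⌋` over rows), as a natural number. -/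
def epsPart (d : ℕ) (p : ℕ → ℕ) : ℕ :=
  ∑ a ∈ Finset.range d, p a / 2

/-- `n_i` of a single partition `p` placed in a component with offset `k`:
the number of nodes `(a,b)` of `p` with `k + b - a = i` in `ℤ/2ℤ`. -/
noncomputable def nNodes (k i : ZMod 2) (p : ℕ → ℕ) : ℕ :=
  {N : ℕ × ℕ | N.2 < p N.1 ∧ k + (N.2 : ZMod 2) - (N.1 : ZMod 2) = i}.ncard

/-- The parity `ε(λ)` of an `l`-multipartition. -/
noncomputable def eps (κ : Fin l → ZMod 2) (d : ℕ) (lam : Fin l → ℕ → ℕ) : ZMod 2 :=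
  ((∑ m : Fin l, epsPart d (lam m) : ℕ) : ZMod 2) +
    ((∑ j : Fin l, ∑ m : Fin l, if j < m then nNodes (κ j) (κ m) (lam j) else 0 : ℕ) : ZMod 2)

end Cyclo

namespace Cyclo

lemma z2_cases (x : ZMod 2) : x = 0 ∨ x = 1 := by
  revert x; decide

lemma diagram_isDiagram {l : ℕ} (p : Fin l → ℕ → ℕ) (hp : ∀ m, Antitone (p m)) :
    IsDiagram (diagram p) := by
  intro m a b a' b' h ha hb
  simp only [diagram, Set.mem_ofPred_eq] at *
  have := hp m ha
  omega

lemma addable_iff {l : ℕ} (p : Fin l → ℕ → ℕ) (hp : ∀ m, Antitone (p m)) (m : Fin l) (a b : ℕ) :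
    Addable (diagram p) (m, a, b) ↔ b = p m a ∧ (a = 0 ∨ p m a < p m (a - 1)) := by
  constructor
  · rintro ⟨h1, h2⟩
    simp only [diagram, Set.mem_ofPred_eq, not_lt] at h1
    have hb : b = p m a := by
      by_contra hne
      have h3 := h2 m a b a (p m a) (Set.mem_insert _ _) le_rfl h1
      simp [diagram] at h3
      omega
    refine ⟨hb, ?_⟩
    by_contra hcon
    push Not at hcon
    have h3 := h2 m a b (a - 1) b (Set.mem_insert _ _) (by omega) le_rfl
    simp [diagram] at h3
    omega
  · rintro ⟨rfl, h⟩
    refine ⟨by simp [diagram], ?_⟩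
    intro m' a' b' a'' b'' hm ha hb
    rcases hm with hm | hm
    · simp only [Prod.mk.injEq] at hm
      obtain ⟨rfl, rfl, rfl⟩ := hm
      by_cases h1 : a'' = a'
      · subst h1
        by_cases h2 : b'' = p m' a''
        · left; simp [h2]
        · right; simp only [diagram, Set.mem_ofPred_eq]; omega
      · right
        simp only [diagram, Set.mem_ofPred_eq]
        have : p m' (a' - 1) ≤ p m' a'' := hp m' (by omega)
        omega
    · right
      exact diagram_isDiagram p hp _ _ _ _ _ hm ha hb

lemma removable_iff {l : ℕ} (p : Fin l → ℕ → ℕ) (hp : ∀ m, Antitone (p m))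
    (m : Fin l) (a b : ℕ) :
    Removable (diagram p) (m, a, b) ↔ b = p m a - 1 ∧ p m (a + 1) < p m a := by
  constructor
  · rintro ⟨h1, h2⟩
    simp only [diagram, Set.mem_ofPred_eq] at h1
    have hb : b = p m a - 1 := by
      by_contra hne
      have h3 := h2 m a (b + 1) a b ⟨by simp only [diagram, Set.mem_ofPred_eq]; omega, by simp⟩
        le_rfl (by omega)
      exact h3.2 rfl
    refine ⟨hb, ?_⟩
    by_contra hcon
    have h3 := h2 m (a + 1) b a b ⟨by simp only [diagram, Set.mem_ofPred_eq]; omega, by simp⟩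
        (by omega) le_rfl
    exact h3.2 rfl
  · rintro ⟨rfl, h⟩
    refine ⟨by simp only [diagram, Set.mem_ofPred_eq]; omega, ?_⟩
    intro m' a' b' a'' b'' hm ha hb
    refine ⟨diagram_isDiagram p hp _ _ _ _ _ hm.1 ha hb, ?_⟩
    intro heq
    simp only [Set.mem_singleton_iff, Prod.mk.injEq] at heq
    obtain ⟨rfl, rfl, rfl⟩ := heq
    obtain ⟨h3, h4⟩ := hm
    simp only [diagram, Set.mem_ofPred_eq] at h3
    simp only [Set.mem_singleton_iff, Prod.mk.injEq, true_and, not_and] at h4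
    by_cases h5 : a' = a''
    · subst h5
      exact h4 rfl (by omega)
    · have : p m' a' ≤ p m' (a'' + 1) := hp m' (by omega)
      omega

open Classical in
lemma ncard_graph {l : ℕ} (S : Set (Node l)) (f : Fin l → ℕ → ℕ) (P : Fin l → ℕ → Prop) (D : ℕ)
    (hS : ∀ m a b, (m, a, b) ∈ S ↔ b = f m a ∧ P m a)
    (hP : ∀ m a, P m a → a < D) :
    S.ncard = ∑ m : Fin l, ∑ a ∈ Finset.range D, if P m a then 1 else 0 := by
  have : S = ((((Finset.univ : Finset (Fin l)) ×ˢ Finset.range D).filter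
      (fun x => P x.1 x.2)).image (fun x => (x.1, x.2, f x.1 x.2)) : Finset (Node l)) := by
    ext ⟨m, a, b⟩
    rw [hS]
    simp only [Finset.coe_image, Set.mem_image, Finset.mem_coe, Finset.mem_filter,
      Finset.mem_product, Finset.mem_univ, true_and, Finset.mem_range, Prod.mk.injEq, Prod.exists]
    constructor
    · rintro ⟨rfl, h⟩
      exact ⟨m, a, ⟨hP m a h, h⟩, rfl, rfl, rfl⟩
    · rintro ⟨m', a', ⟨h1, h2⟩, rfl, rfl, rfl⟩
      exact ⟨rfl, h2⟩
  rw [this, Set.ncard_coe_finset, Finset.card_image_of_injective, Finset.card_filter,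
    Finset.sum_product]
  rintro ⟨m, a⟩ ⟨m', a'⟩ h
  simp only [Prod.mk.injEq] at h
  simp [h.1, h.2.1]

open Classical in
noncomputable def addc (x : ZMod 2) (p : ℕ → ℕ) (a : ℕ) : ZMod 2 :=
  if (a = 0 ∨ p a < p (a - 1)) ∧ x + (p a : ZMod 2) - a = 0 then 1 else 0

open Classical in
noncomputable def remc (x : ZMod 2) (p : ℕ → ℕ) (a : ℕ) : ZMod 2 :=
  if p (a + 1) < p a ∧ x + ((p a - 1 : ℕ) : ZMod 2) - a = 0 then 1 else 0

lemma add_sub_rem (x : ZMod 2) (p : ℕ → ℕ) (hp : Antitone p) (a : ℕ) :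
    addc x p (a + 1) = (p a : ZMod 2) - p (a + 1) + remc x p a := by
  unfold addc remc
  rcases lt_or_eq_of_le (hp (Nat.le_succ a)) with h | h
  · have h' : p (a + 1) < p a := h
    obtain ⟨c, hc⟩ : ∃ c, p a = c + 1 := ⟨p a - 1, by omega⟩
    simp only [Nat.add_sub_cancel, h', Nat.succ_ne_zero, false_or, true_and]
    rw [hc, Nat.add_sub_cancel]
    push_cast
    generalize (p (a + 1) : ZMod 2) = u
    generalize (c : ZMod 2) = v
    generalize (a : ZMod 2) = w
    revert x u v w
    decide
  · have h' : p (a + 1) = p a := h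
    simp [h']

lemma sum_below (x : ZMod 2) (p : ℕ → ℕ) (hp : Antitone p) (a0 n : ℕ) (hn : a0 ≤ n) :
    ∑ a ∈ Finset.range (n + 1), (if a0 < a then addc x p a - remc x p a else 0)
      = (p a0 : ZMod 2) - p n + remc x p a0 - remc x p n := by
  induction n, hn using Nat.le_induction with
  | base =>
    rw [Finset.sum_eq_zero]
    · ring
    · intro a ha
      rw [Finset.mem_range] at ha
      rw [if_neg (by omega)]
  | succ n hn ih =>
    rw [Finset.sum_range_succ, ih, if_pos (by omega), add_sub_rem x p hp]
    ring

lemma sum_all (x : ZMod 2) (p : ℕ → ℕ) (hp : Antitone p) (n : ℕ) :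
    ∑ a ∈ Finset.range (n + 1), (addc x p a - remc x p a)
      = addc x p 0 + (p 0 : ZMod 2) - p n - remc x p n := by
  induction n with
  | zero => simp
  | succ n ih =>
    rw [Finset.sum_range_succ, ih, add_sub_rem x p hp]
    ring

lemma dN_eq {l : ℕ} (κ : Fin l → ZMod 2) (p : Fin l → ℕ → ℕ) (hp : ∀ m, Antitone (p m)) (D : ℕ)
    (hD : ∀ m a, D ≤ a → p m a = 0) (N : Node l) (h1 : p N.1 N.2.1 = N.2.2 + 1)
    (h2 : p N.1 (N.2.1 + 1) < p N.1 N.2.1) :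
    ((dN κ (diagram p) N : ℤ) : ZMod 2)
      = (N.2.2 : ZMod 2) + ∑ m : Fin l, if N.1 < m then (if res κ N = κ m then 1 else 0) else 0 := by
  classical
  obtain ⟨m0, a0, b0⟩ := N
  simp only at h1 h2
  unfold dN
  rw [ncard_graph {M | Addable (diagram p) M ∧ res κ M = res κ (m0, a0, b0) ∧ Below (m0, a0, b0) M}
    (fun m a => p m a)
    (fun m a => (a = 0 ∨ p m a < p m (a - 1)) ∧ res κ (m, a, p m a) = res κ (m0, a0, b0) ∧
      Below (m0, a0, b0) (m, a, 0)) (D + 1) ?_ ?_,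
    ncard_graph {M | Removable (diagram p) M ∧ res κ M = res κ (m0, a0, b0) ∧
      Below (m0, a0, b0) M}
    (fun m a => p m a - 1)
    (fun m a => (p m (a + 1) < p m a) ∧ res κ (m, a, p m a - 1) = res κ (m0, a0, b0) ∧
      Below (m0, a0, b0) (m, a, 0)) (D + 1) ?_ ?_]
  · push_cast
    rw [← Finset.sum_sub_distrib]
    simp only [← Finset.sum_sub_distrib]
    have key : ∀ m : Fin l, ∑ a ∈ Finset.range (D + 1),
        (((if (a = 0 ∨ p m a < p m (a - 1)) ∧ res κ (m, a, p m a) = res κ (m0, a0, b0) ∧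
            Below (m0, a0, b0) (m, a, 0) then 1 else 0 : ZMod 2)) -
          (if (p m (a + 1) < p m a) ∧ res κ (m, a, p m a - 1) = res κ (m0, a0, b0) ∧
            Below (m0, a0, b0) (m, a, 0) then 1 else 0 : ZMod 2))
        = (if m = m0 then (b0 : ZMod 2) else 0) +
          if m0 < m then (if res κ (m0, a0, b0) = κ m then 1 else 0) else 0 := by
      intro m
      have hA : ∀ a, (res κ (m, a, p m a) = res κ (m0, a0, b0) ↔
          (κ m - res κ (m0, a0, b0)) + (p m a : ZMod 2) - a = 0) := by
        intro a
        rw [← sub_eq_zero]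
        simp only [res]
        constructor <;> intro h <;> rw [← h] <;> ring
      have hR : ∀ a, (res κ (m, a, p m a - 1) = res κ (m0, a0, b0) ↔
          (κ m - res κ (m0, a0, b0)) + ((p m a - 1 : ℕ) : ZMod 2) - a = 0) := by
        intro a
        rw [← sub_eq_zero]
        simp only [res]
        constructor <;> intro h <;> rw [← h] <;> ring
      have hpD : p m D = 0 := hD m D le_rfl
      have hrD : remc (κ m - res κ (m0, a0, b0)) (p m) D = 0 := by
        simp [remc, hpD]
      rcases lt_trichotomy m m0 with h | h | h
      · rw [Finset.sum_eq_zero]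
        · rw [if_neg h.ne, if_neg h.not_gt]; simp
        · intro a _
          have : ¬ Below (m0, a0, b0) (m, a, 0) := by
            simp only [Below]
            rintro (h' | h')
            · exact absurd h h'.not_gt
            · exact h.ne h'.1.symm
          simp [this]
      · subst h
        have hle : a0 ≤ D := by
          by_contra hcon
          have := hD m a0 (by omega)
          omega
        rw [if_pos rfl, if_neg (lt_irrefl _), add_zero]
        have := sum_below (κ m - res κ (m, a0, b0)) (p m) (hp m) a0 D hle
        rw [hrD, hpD] at this
        have hr0 : remc (κ m - res κ (m, a0, b0)) (p m) a0 = 1 := by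
          unfold remc
          rw [if_pos]
          refine ⟨h2, ?_⟩
          rw [h1, Nat.add_sub_cancel]
          simp only [res]
          ring
        rw [hr0, h1] at this
        have e : (((b0 + 1 : ℕ) : ZMod 2) - (0 : ℕ) + 1 - 0) = b0 := by
          push_cast
          generalize (b0 : ZMod 2) = u
          revert u; decide
        rw [e] at this
        rw [← this]
        apply Finset.sum_congr rfl
        intro a _
        have hB : Below (m, a0, b0) (m, a, 0) ↔ a0 < a := by simp [Below]
        simp only [hA, hR, hB, addc, remc]
        by_cases ha : a0 < a <;> simp [ha]
      · rw [if_neg h.ne', if_pos h, zero_add]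
        have := sum_all (κ m - res κ (m0, a0, b0)) (p m) (hp m) D
        rw [hrD, hpD] at this
        have e : addc (κ m - res κ (m0, a0, b0)) (p m) 0 + (p m 0 : ZMod 2) - (0 : ℕ) - 0
            = (if res κ (m0, a0, b0) = κ m then 1 else 0) := by
          simp only [addc, true_or, true_and]
          push_cast
          generalize res κ (m0, a0, b0) = u
          generalize κ m = v
          generalize (p m 0 : ZMod 2) = w
          revert u v w; decide
        rw [e] at this
        rw [← this]
        apply Finset.sum_congr rfl
        intro a _
        have hB : Below (m0, a0, b0) (m, a, 0) := Or.inl h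
        simp only [hA, hR, hB, addc, remc, and_true]
    rw [Finset.sum_congr rfl (fun m _ => key m), Finset.sum_add_distrib]
    simp
  · intro m a b
    simp only [Set.mem_ofPred_eq, removable_iff p hp, Below]
    constructor
    · rintro ⟨⟨rfl, h⟩, h', h''⟩
      exact ⟨rfl, h, h', h''⟩
    · rintro ⟨rfl, h, h', h''⟩
      exact ⟨⟨rfl, h⟩, h', h''⟩
  · rintro m a ⟨h, -⟩
    by_contra hc
    have := hD m a (by omega)
    omega
  · intro m a b
    simp only [Set.mem_ofPred_eq, addable_iff p hp, Below]
    constructor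
    · rintro ⟨⟨rfl, h⟩, h', h''⟩
      exact ⟨rfl, h, h', h''⟩
    · rintro ⟨rfl, h, h', h''⟩
      exact ⟨⟨rfl, h⟩, h', h''⟩
  · rintro m a ⟨h, -⟩
    by_contra hc
    have := hD m (a - 1) (by omega)
    omega

lemma exists_shape {l : ℕ} (Y : Set (Node l)) (hY : IsDiagram Y) (lam : Fin l → ℕ → ℕ)
    (hsub : Y ⊆ diagram lam) :
    ∃ p : Fin l → ℕ → ℕ, (∀ m, Antitone (p m)) ∧ (∀ m a, p m a ≤ lam m a) ∧ Y = diagram p := by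
  have hex : ∀ m a, (m, a, lam m a) ∉ Y := by
    intro m a h
    have := hsub h
    simp [diagram] at this
  have hlt : ∀ m a b, b < sInf {b | (m, a, b) ∉ Y} ↔ (m, a, b) ∈ Y := by
    intro m a b
    constructor
    · intro h
      by_contra hc
      exact Nat.notMem_of_lt_sInf h hc
    · intro h
      by_contra hc
      have h1 : sInf {b | (m, a, b) ∉ Y} ∈ {b | (m, a, b) ∉ Y} := Nat.sInf_mem ⟨_, hex m a⟩
      exact h1 (hY m a b a _ h le_rfl (not_lt.mp hc))
  refine ⟨fun m a => sInf {b | (m, a, b) ∉ Y}, ?_, ?_, ?_⟩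
  · intro m a a' ha
    apply le_of_forall_lt
    intro b hb
    rw [hlt] at hb ⊢
    exact hY _ _ _ _ _ hb ha le_rfl
  · intro m a
    exact Nat.sInf_le (hex m a)
  · ext ⟨m, a, b⟩
    exact (hlt m a b).symm

lemma dN_tab {l d : ℕ} (κ : Fin l → ZMod 2) (lam : Fin l → ℕ → ℕ)
    (hlam : IsMultipartition lam d) (t : Fin d → Node l) (ht : IsStandard lam t) (r : Fin d) :
    ((dN κ (t '' {s | s ≤ r}) (t r) : ℤ) : ZMod 2)
      = ((t r).2.2 : ZMod 2) +
        ∑ m : Fin l, if (t r).1 < m then (if res κ (t r) = κ m then 1 else 0) else 0 := by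
  obtain ⟨⟨hinj, hran⟩, hst⟩ := ht
  have hsub : t '' {s | s ≤ r} ⊆ diagram lam := by
    rw [← hran]; exact Set.image_subset_range _ _
  have hdia : IsDiagram (t '' {s | s ≤ r}) := by
    rintro m a b a' b' ⟨s, hs, hse⟩ ha hb
    have h1 : (m, a, b) ∈ diagram lam := by rw [← hran, ← hse]; exact ⟨s, rfl⟩
    have h2 := diagram_isDiagram lam hlam.1 _ _ _ _ _ h1 ha hb
    rw [← hran] at h2
    obtain ⟨s', hs'⟩ := h2
    refine ⟨s', ?_, hs'⟩
    have : s' ≤ s := by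
      apply hst <;> rw [hs', hse]
      · exact ha
      · exact hb
    exact le_trans this hs
  have hmax : ∀ a b, (t r).2.1 ≤ a → (t r).2.2 ≤ b → ((t r).1, a, b) ∈ t '' {s | s ≤ r} →
      a = (t r).2.1 ∧ b = (t r).2.2 := by
    rintro a b ha hb ⟨s, hs, hse⟩
    have : r ≤ s := by
      apply hst <;> rw [hse]
      · exact ha
      · exact hb
    have : s = r := le_antisymm hs this
    subst this
    rw [hse]
    exact ⟨rfl, rfl⟩
  obtain ⟨p, hp, hle, hYp⟩ := exists_shape _ hdia lam hsub
  have hmem : t r ∈ t '' {s | s ≤ r} := ⟨r, le_refl r, rfl⟩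
  rw [hYp] at hmem hmax ⊢
  simp only [diagram, Set.mem_ofPred_eq] at hmem hmax
  have h1 : p (t r).1 (t r).2.1 = (t r).2.2 + 1 := by
    by_contra hc
    have := hmax (t r).2.1 ((t r).2.2 + 1) le_rfl (by omega) (by omega)
    omega
  apply dN_eq κ p hp d _ _ h1
  · by_contra hc
    have := hmax ((t r).2.1 + 1) ((t r).2.2) (by omega) le_rfl (by omega)
    omega
  · intro m a ha
    have := hle m a
    have := hlam.2.1 m a ha
    omega

lemma sum_tab {l d : ℕ} (lam : Fin l → ℕ → ℕ)
    (hlam : IsMultipartition lam d) (t : Fin d → Node l) (ht : IsTableau lam t)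
    (f : Node l → ZMod 2) :
    ∑ r : Fin d, f (t r) =
      ∑ m : Fin l, ∑ a ∈ Finset.range d, ∑ b ∈ Finset.range (lam m a), f (m, a, b) := by
  classical
  have h1 : ∑ r : Fin d, f (t r) = ∑ x ∈ Finset.univ.image t, f x :=
    (Finset.sum_image (fun _ _ _ _ h => ht.1 h)).symm
  have h2 : ∀ m : Fin l, ∑ a ∈ Finset.range d, ∑ b ∈ Finset.range (lam m a), f (m, a, b)
      = ∑ y ∈ (Finset.range d).sigma (fun a => Finset.range (lam m a)), f (m, y.1, y.2) := by
    intro m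
    rw [Finset.sum_sigma]
  rw [h1, Finset.sum_congr rfl (fun m _ => h2 m), Finset.sum_sigma']
  symm
  refine Finset.sum_bij (fun x _ => (x.1, x.2.1, x.2.2)) ?_ ?_ ?_ ?_
  · rintro ⟨m, a, b⟩ h
    simp only [Finset.mem_sigma, Finset.mem_univ, Finset.mem_range, true_and] at h
    have : (m, a, b) ∈ Set.range t := by rw [ht.2]; exact h.2
    simpa using this
  · rintro ⟨m, a, b⟩ _ ⟨m', a', b'⟩ _ h
    simp only [Prod.mk.injEq] at h
    obtain ⟨rfl, rfl, rfl⟩ := h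
    rfl
  · rintro ⟨m, a, b⟩ h
    have h' : (m, a, b) ∈ Set.range t := by simpa using h
    rw [ht.2] at h'
    simp only [diagram, Set.mem_ofPred_eq] at h'
    refine ⟨⟨m, a, b⟩, ?_, rfl⟩
    simp only [Finset.mem_sigma, Finset.mem_univ, Finset.mem_range, true_and]
    refine ⟨?_, h'⟩
    by_contra hc
    have := hlam.2.1 m a (by omega)
    omega
  · intros; rfl

lemma sum_range_z2 (n : ℕ) : ∑ b ∈ Finset.range n, (b : ZMod 2) = ((n / 2 : ℕ) : ZMod 2) := by
  induction n with
  | zero => simp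
  | succ n ih =>
    rw [Finset.sum_range_succ, ih, ← Nat.cast_add, ZMod.natCast_eq_natCast_iff']
    obtain ⟨k, hk | hk⟩ : ∃ k, n = 2 * k ∨ n = 2 * k + 1 := ⟨n / 2, by omega⟩
    · have e1 : n / 2 = k := by omega
      have e2 : (n + 1) / 2 = k := by omega
      rw [e1, e2]; omega
    · have e1 : n / 2 = k := by omega
      have e2 : (n + 1) / 2 = k + 1 := by omega
      rw [e1, e2]; omega

lemma nNodes_eq (k i : ZMod 2) (p : ℕ → ℕ) (d : ℕ) (hd : ∀ a, d ≤ a → p a = 0) :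
    nNodes k i p = ∑ a ∈ Finset.range d, ∑ b ∈ Finset.range (p a),
      if k + (b : ZMod 2) - (a : ZMod 2) = i then 1 else 0 := by
  classical
  have : {N : ℕ × ℕ | N.2 < p N.1 ∧ k + (N.2 : ZMod 2) - (N.1 : ZMod 2) = i} =
      ((((Finset.range d).sigma (fun a => Finset.range (p a))).filter
        (fun y => k + (y.2 : ZMod 2) - (y.1 : ZMod 2) = i)).image (fun y => (y.1, y.2)) :
        Finset (ℕ × ℕ)) := by
    ext ⟨a, b⟩
    simp only [Set.mem_ofPred_eq, Finset.coe_image, Set.mem_image, Finset.mem_coe,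
      Finset.mem_filter, Finset.mem_sigma, Finset.mem_range, Prod.mk.injEq, Sigma.exists]
    constructor
    · rintro ⟨h1, h2⟩
      refine ⟨a, b, ⟨⟨?_, h1⟩, h2⟩, rfl, rfl⟩
      by_contra hc
      have := hd a (by omega)
      omega
    · rintro ⟨a', b', ⟨⟨_, h1⟩, h2⟩, rfl, rfl⟩
      exact ⟨h1, h2⟩
  rw [nNodes, this, Set.ncard_coe_finset, Finset.card_image_of_injective, Finset.card_filter,
    Finset.sum_sigma]
  rintro ⟨a, b⟩ ⟨a', b'⟩ h
  simp only [Prod.mk.injEq] at h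
  obtain ⟨rfl, rfl⟩ := h
  rfl

end Cyclo

open Cyclo in
/-- **Theorem 1 of the paper.** For any `l`-multipartition `λ` of
`d` (`l ≥ 1`), every standard `λ`-tableau `t` satisfies
`deg(t) ≡ ε(λ) (mod 2)`.  Equivalently, the graded dimension
`Σ_t q^{deg t}` of the Specht module `S(λ)` has non-zero coefficients only in
degrees congruent to `ε(λ)` modulo `2`. -/
theorem statement3 (l d : ℕ) (hl : 1 ≤ l)
    (κ : Fin l → ZMod 2) (lam : Fin l → ℕ → ℕ)
    (hlam : IsMultipartition lam d)
    (t : Fin d → Node l) (ht : IsStandard lam t) :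
    ((deg κ t : ℤ) : ZMod 2) = eps κ d lam := by
  unfold deg eps
  rw [Int.cast_sum, Finset.sum_congr rfl (fun r _ => dN_tab κ lam hlam t ht r),
    sum_tab lam hlam t ht.1 (fun N => (N.2.2 : ZMod 2) +
        ∑ m : Fin l, if N.1 < m then (if res κ N = κ m then 1 else 0) else 0)]
  simp only [Finset.sum_add_distrib]
  congr 1
  · push_cast
    apply Finset.sum_congr rfl
    intro m _
    simp only [epsPart, sum_range_z2, Nat.cast_sum]
  · push_cast
    apply Finset.sum_congr rfl
    intro j _
    have h1 : ∀ a ∈ Finset.range d, (∑ b ∈ Finset.range (lam j a), ∑ m : Fin l,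
        (if j < m then (if res κ (j, a, b) = κ m then 1 else 0) else 0 : ZMod 2)) =
        ∑ m : Fin l, ∑ b ∈ Finset.range (lam j a),
        (if j < m then (if res κ (j, a, b) = κ m then 1 else 0) else 0 : ZMod 2) :=
      fun a _ => Finset.sum_comm
    rw [Finset.sum_congr rfl h1, Finset.sum_comm]
    apply Finset.sum_congr rfl
    intro m _
    by_cases hjm : j < m
    · simp only [hjm, if_true]
      rw [nNodes_eq _ _ _ d (hlam.2.1 j)]
      push_cast
      rfl
    · simp [hjm]
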